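/- arXiv:2506.17932 — 2 statements merged into one kernel-verified Lean document; each statement's English description precedes it below -/
import Mathlib

section
/- Let X be a compact metric space, T: X → X a continuous map, A = (t_i)_{i≥1} a sequence of natural numbers, and μ a T-invariant Borel probability measure on X. Then the measure-theoretic sequence entropy satisfies h^A_μ(T) ≤ h^A_top(T). Consequently, sup_{μ ∈ M_T(X)} h^A_μ(T) ≤ h^A_top(T), where M_T(X) is the set of T-invariant Borel probability measures on X. -/
open Filter MeasureTheory

variable {X : Type*} [MetricSpace X]

/-- `spaN T F ε` : the minimal cardinality of a set `E ⊆ X` such that every `x ∈ X`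
satisfies `max_{i ∈ F} dist (T^[i] x) (T^[i] e) ≤ ε` for some `e ∈ E`. -/
noncomputable def spaN (T : X → X) (F : Finset ℕ) (ε : ℝ) : ℕ :=
  sInf {k : ℕ | ∃ E : Finset X, E.card = k ∧
    ∀ x : X, ∃ e ∈ E, ∀ i ∈ F, dist (T^[i] x) (T^[i] e) ≤ ε}

/-- Topological sequence entropy along the sequence `A = (t_i)_{i ≥ 1}`:
`h^A_top(T) = lim_{ε→0⁺} limsup_n (1/n) log spa(T,{t₁,…,t_n},ε)`
(the limit as `ε → 0⁺` of the antitone-in-`ε` quantity is its supremum over `ε > 0`). -/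
noncomputable def seqEntTop (T : X → X) (A : ℕ → ℕ) : EReal :=
  ⨆ (ε : ℝ) (_ : 0 < ε),
    Filter.limsup
      (fun n : ℕ =>
        ((Real.log (spaN T ((Finset.Icc 1 n).image A) ε) / n : ℝ) : EReal))
      Filter.atTop

/-- A finite measurable partition of `X`, modelled with atoms indexed by `Fin k`. -/
def IsMeasPartition {X : Type*} [MeasurableSpace X] {k : ℕ} (ξ : Fin k → Set X) : Prop :=
  (∀ i, MeasurableSet (ξ i)) ∧ Pairwise (Function.onFun Disjoint ξ) ∧ (⋃ i, ξ i) = Set.univ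

/-- `H(ξ^F)` : the Shannon entropy of the join `⋁_{i∈F} T^{−i}ξ`, whose atoms are the
intersections `⋂_{i∈F} T^{−i} ξ(g i)` over all choices `g`. -/
noncomputable def Hjoin {X : Type*} [MeasurableSpace X] (μ : Measure X) (T : X → X)
    (F : Finset ℕ) {k : ℕ} (ξ : Fin k → Set X) : ℝ :=
  ∑ g : {i // i ∈ F} → Fin k,
    Real.negMulLog (μ (⋂ i : {i // i ∈ F}, T^[(i : ℕ)] ⁻¹' ξ (g i))).toReal

/-- Measure-theoretic sequence entropy along `A = (t_i)_{i ≥ 1}`: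
`h^A_μ(T) = sup_ξ limsup_n (1/n) H(ξ^{{t₁,…,t_n}})`, the supremum over all finite
measurable partitions `ξ`. -/
noncomputable def seqEntMeas {X : Type*} [MeasurableSpace X] (μ : Measure X) (T : X → X)
    (A : ℕ → ℕ) : EReal :=
  ⨆ (k : ℕ) (ξ : Fin k → Set X) (_ : IsMeasPartition ξ),
    Filter.limsup
      (fun n : ℕ => ((Hjoin μ T ((Finset.Icc 1 n).image A) ξ / n : ℝ) : EReal))
      Filter.atTop

/-! Code points by their `ξ`-names along `F`. If `ε` is small, the `ξ`-atom of `y` is determined by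
any point `ε`-close to `y`, except on a set `B` of small measure. So the names of the points of an
`ε`-spanning set form a code such that the name of `x` is within Hamming distance
`#{i ∈ F | T^[i] x ∈ B}` of a codeword; by invariance this distance has mean `#F * μ B`.
Gibbs' inequality, applied to weights decaying exponentially in the Hamming distance to the code,
bounds the entropy of the name by the logarithm of the size of the code plus a small multiple of
`#F`. -/

section Entropy

open Function

theorem sum_negMulLog_le_sum_mul_neg_log_add_log_sum {α : Type*} {s : Finset α} {p w : α → ℝ}
    (hp : ∀ a ∈ s, 0 ≤ p a) (hp1 : ∑ a ∈ s, p a = 1) (hw : ∀ a ∈ s, 0 < w a) :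
    ∑ a ∈ s, Real.negMulLog (p a) ≤ ∑ a ∈ s, p a * -Real.log (w a) + Real.log (∑ a ∈ s, w a) := by
  have hs : s.Nonempty := Finset.nonempty_of_sum_ne_zero (hp1.trans_ne one_ne_zero)
  have hZ : 0 < ∑ a ∈ s, w a := Finset.sum_pos hw hs
  set Z := ∑ a ∈ s, w a
  set q : α → ℝ := fun a => w a / Z
  have hq : ∀ a ∈ s, 0 < q a := fun a ha => div_pos (hw a ha) hZ
  have hq1 : ∑ a ∈ s, q a = 1 := by rw [← Finset.sum_div, div_self hZ.ne']
  have hpq : ∀ a ∈ s, q a * (p a / q a) = p a := fun a ha => mul_div_cancel₀ _ (hq a ha).ne'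
  have jensen : ∑ a ∈ s, q a * Real.negMulLog (p a / q a) ≤ 0 := by
    have h := Real.concaveOn_negMulLog.le_map_sum (fun a ha => (hq a ha).le) hq1
      (fun a ha => div_nonneg (hp a ha) (hq a ha).le)
    simpa only [smul_eq_mul, Finset.sum_congr rfl hpq, hp1, Real.negMulLog_one] using h
  have split : ∀ a ∈ s, Real.negMulLog (p a) =
      p a * -Real.log (w a) + p a * Real.log Z + q a * Real.negMulLog (p a / q a) := by
    intro a ha
    have hlog : Real.log (q a) = Real.log (w a) - Real.log Z :=
      Real.log_div (hw a ha).ne' hZ.ne'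
    calc Real.negMulLog (p a) = Real.negMulLog (q a * (p a / q a)) := by rw [hpq a ha]
      _ = -(q a * (p a / q a)) * Real.log (q a) + q a * Real.negMulLog (p a / q a) := by
        rw [Real.negMulLog_mul, Real.negMulLog_def]; ring
      _ = _ := by rw [hpq a ha, hlog]; ring
  rw [Finset.sum_congr rfl split, Finset.sum_add_distrib, Finset.sum_add_distrib,
    ← Finset.sum_mul, hp1, one_mul]
  linarith

theorem sum_pow_hammingDist {ι κ R : Type*} [Fintype ι] [Fintype κ] [DecidableEq ι]
    [DecidableEq κ] [CommRing R] (z : R) (c : ι → κ) :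
    ∑ g : ι → κ, z ^ hammingDist g c = (1 + (Fintype.card κ - 1) * z) ^ Fintype.card ι := by
  have hprod (g : ι → κ) : z ^ hammingDist g c = ∏ i, if g i = c i then 1 else z := by
    rw [hammingDist, Finset.prod_ite, Finset.prod_const_one, one_mul, Finset.prod_const]
  have hfactor (i : ι) : ∑ j, (if j = c i then 1 else z) = 1 + (Fintype.card κ - 1) * z := by
    rw [← Finset.add_sum_erase _ _ (Finset.mem_univ (c i)), if_pos rfl,
      Finset.sum_congr rfl fun j hj => if_neg (Finset.ne_of_mem_erase hj), Finset.sum_const,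
      Finset.card_erase_of_mem (Finset.mem_univ _), nsmul_eq_mul, Finset.card_univ,
      Nat.cast_pred (Fintype.card_pos_iff.2 ⟨c i⟩)]
  simp_rw [hprod]
  rw [← Fintype.piFinset_univ, Finset.sum_prod_piFinset _ fun i j => if j = c i then 1 else z]
  simp_rw [hfactor]
  rw [Finset.prod_const, Finset.card_univ]

variable {Ω : Type*} [MeasurableSpace Ω] {μ : Measure Ω} [IsProbabilityMeasure μ]

theorem sum_negMulLog_measureReal_le_integral_add_log_sum {α : Type*} [Fintype α] {Q : α → Set Ω}
    (hQm : ∀ a, MeasurableSet (Q a)) (hQd : Pairwise (Disjoint on Q)) (hQU : ⋃ a, Q a = Set.univ)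
    {w : α → ℝ} (hw : ∀ a, 0 < w a) {R : Ω → ℝ} (hR : Integrable R μ)
    (hwR : ∀ a, ∀ x ∈ Q a, -Real.log (w a) ≤ R x) :
    ∑ a, Real.negMulLog (μ.real (Q a)) ≤ ∫ x, R x ∂μ + Real.log (∑ a, w a) := by
  have hsum : ∑ a, μ.real (Q a) = 1 := by
    rw [← measureReal_iUnion_fintype hQd hQm, hQU, probReal_univ]
  have hcell (a : α) : μ.real (Q a) * -Real.log (w a) ≤ ∫ x in Q a, R x ∂μ := by
    rw [← smul_eq_mul, ← setIntegral_const]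
    exact setIntegral_mono_on (integrable_const _).integrableOn hR.integrableOn (hQm a) (hwR a)
  calc ∑ a, Real.negMulLog (μ.real (Q a))
      ≤ ∑ a, μ.real (Q a) * -Real.log (w a) + Real.log (∑ a, w a) :=
        sum_negMulLog_le_sum_mul_neg_log_add_log_sum (fun _ _ => measureReal_nonneg) hsum
          fun a _ => hw a
    _ ≤ ∑ a, ∫ x in Q a, R x ∂μ + Real.log (∑ a, w a) := by gcongr; exact hcell _
    _ = ∫ x, R x ∂μ + Real.log (∑ a, w a) := by
      rw [← integral_iUnion_fintype hQm hQd fun _ => hR.integrableOn, hQU, Measure.restrict_univ]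

theorem sum_negMulLog_measureReal_le_of_hammingDist_le {ι κ : Type*} [Fintype ι] [Fintype κ]
    [DecidableEq ι] [DecidableEq κ] {Q : (ι → κ) → Set Ω} (hQm : ∀ g, MeasurableSet (Q g))
    (hQd : Pairwise (Disjoint on Q)) (hQU : ⋃ g, Q g = Set.univ) {C : Finset (ι → κ)}
    {N : Ω → ℝ} (hN : Integrable N μ) (hQC : ∀ g, ∀ x ∈ Q g, ∃ c ∈ C, hammingDist g c ≤ N x)
    {z : ℝ} (hz : 0 < z) (hz1 : z ≤ 1) :
    ∑ g, Real.negMulLog (μ.real (Q g)) ≤ Real.log C.card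
      + Fintype.card ι * Real.log (1 + (Fintype.card κ - 1) * z) + -Real.log z * ∫ x, N x ∂μ := by
  obtain ⟨x₀⟩ := μ.nonempty_of_neZero
  obtain ⟨g₀, hg₀⟩ := Set.mem_iUnion.1 (hQU.symm ▸ Set.mem_univ x₀)
  obtain ⟨c₀, hc₀, -⟩ := hQC g₀ x₀ hg₀
  set w : (ι → κ) → ℝ := fun g => ∑ c ∈ C, z ^ hammingDist g c
  have hw (g) : 0 < w g := Finset.sum_pos (fun _ _ => pow_pos hz _) ⟨c₀, hc₀⟩
  have hwN : ∀ g, ∀ x ∈ Q g, -Real.log (w g) ≤ -Real.log z * N x := by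
    intro g x hx
    obtain ⟨c, hc, hd⟩ := hQC g x hx
    have hzw : z ^ hammingDist g c ≤ w g :=
      Finset.single_le_sum (f := fun c => z ^ hammingDist g c) (fun _ _ => (pow_pos hz _).le) hc
    calc -Real.log (w g) ≤ -Real.log (z ^ hammingDist g c) :=
          neg_le_neg (Real.log_le_log (pow_pos hz _) hzw)
      _ = -Real.log z * hammingDist g c := by rw [Real.log_pow]; ring
      _ ≤ -Real.log z * N x :=
          mul_le_mul_of_nonneg_left hd (neg_nonneg.2 (Real.log_nonpos hz.le hz1))
  have hbase : (1 + (Fintype.card κ - 1) * z) ^ Fintype.card ι ≠ 0 := by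
    rw [← sum_pow_hammingDist z c₀]
    exact (Finset.sum_pos (fun _ _ => pow_pos hz _) ⟨c₀, Finset.mem_univ _⟩).ne'
  have hsum : ∑ g, w g = C.card * (1 + (Fintype.card κ - 1) * z) ^ Fintype.card ι := by
    rw [Finset.sum_comm, Finset.sum_congr rfl fun c _ => sum_pow_hammingDist z c,
      Finset.sum_const, nsmul_eq_mul]
  have hmain := sum_negMulLog_measureReal_le_integral_add_log_sum hQm hQd hQU hw
    (hN.const_mul (-Real.log z)) hwN
  rwa [hsum, Real.log_mul (by exact_mod_cast Finset.card_ne_zero_of_mem hc₀) hbase, Real.log_pow,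
    integral_const_mul, add_comm] at hmain

end Entropy

section Approximation

open Function

variable {Y : Type*} [PseudoMetricSpace Y]

theorem exists_isClosed_subset_measure_compl_iUnion_lt {ι : Type*} [Countable ι]
    [MeasurableSpace Y] [BorelSpace Y] {μ : Measure Y} [IsFiniteMeasure μ] {ξ : ι → Set Y}
    (hm : ∀ i, MeasurableSet (ξ i)) (hU : ⋃ i, ξ i = Set.univ) {r : ENNReal} (hr : r ≠ 0) :
    ∃ C : ι → Set Y, (∀ i, C i ⊆ ξ i) ∧ (∀ i, IsClosed (C i)) ∧ μ (⋃ i, C i)ᶜ < r := by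
  obtain ⟨r', hr'0, hr'⟩ := ENNReal.exists_pos_sum_of_countable' hr ι
  choose C hCξ hC hμC using fun i =>
    (hm i).exists_isClosed_sdiff_lt (measure_ne_top μ _) (hr'0 i).ne'
  have hcover : (⋃ i, C i)ᶜ ⊆ ⋃ i, ξ i \ C i := by
    intro x hx
    obtain ⟨i, hi⟩ := Set.mem_iUnion.1 (hU.symm ▸ Set.mem_univ x)
    exact Set.mem_iUnion.2 ⟨i, hi, fun hxi => hx (Set.mem_iUnion_of_mem i hxi)⟩
  refine ⟨C, hCξ, hC, ?_⟩
  calc μ (⋃ i, C i)ᶜ ≤ ∑' i, μ (ξ i \ C i) := (measure_mono hcover).trans (measure_iUnion_le _)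
    _ ≤ ∑' i, r' i := ENNReal.tsum_le_tsum fun i => (hμC i).le
    _ < r := hr'

theorem exists_pos_forall_dist_lt_eq_of_pairwise_disjoint_isClosed {ι : Type*} [Finite ι]
    [Nonempty ι] [CompactSpace Y] {C : ι → Set Y} (hC : ∀ i, IsClosed (C i))
    (hd : Pairwise (Disjoint on C)) :
    ∃ ρ > 0, ∃ c : Y → ι, ∀ x y, dist y x < ρ → ∀ j, y ∈ C j → j = c x := by
  have hcover (x : Y) : ∃ i, ∀ j ≠ i, x ∉ C j := by
    by_cases hx : ∃ i, x ∈ C i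
    · obtain ⟨i, hi⟩ := hx
      exact ⟨i, fun j hj hxj => Set.disjoint_left.1 (hd hj) hxj hi⟩
    · exact ⟨Classical.arbitrary ι, fun j _ hxj => hx ⟨j, hxj⟩⟩
  obtain ⟨ρ, hρ, hball⟩ := lebesgue_number_lemma_of_metric (isCompact_univ (X := Y))
    (c := fun i => ⋂ j ∈ {j | j ≠ i}, (C j)ᶜ)
    (fun i => (Set.toFinite _).isOpen_biInter fun j _ => (hC j).isOpen_compl)
    (fun x _ => by simpa using hcover x)
  choose c hc using fun x => hball x (Set.mem_univ x)
  refine ⟨ρ, hρ, c, fun x y hxy j hy => ?_⟩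
  by_contra hj
  exact Set.mem_iInter₂.1 (hc x (Metric.mem_ball.2 hxy)) j hj hy

theorem exists_index_of_dist_le_off_small_set {ι : Type*} [Finite ι] [Nonempty ι] [CompactSpace Y]
    [MeasurableSpace Y] [BorelSpace Y] (μ : Measure Y) [IsFiniteMeasure μ] {ξ : ι → Set Y}
    (hm : ∀ i, MeasurableSet (ξ i)) (hd : Pairwise (Disjoint on ξ)) (hU : ⋃ i, ξ i = Set.univ)
    {r : ℝ} (hr : 0 < r) :
    ∃ ε > 0, ∃ (c : Y → ι) (B : Set Y), MeasurableSet B ∧ μ.real B ≤ r ∧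
      ∀ x y, dist y x ≤ ε → y ∉ B → y ∈ ξ (c x) := by
  obtain ⟨C, hCξ, hC, hμC⟩ := exists_isClosed_subset_measure_compl_iUnion_lt (μ := μ) hm hU
    (ENNReal.ofReal_pos.2 hr).ne'
  obtain ⟨ρ, hρ, c, hc⟩ := exists_pos_forall_dist_lt_eq_of_pairwise_disjoint_isClosed hC
    fun i j hij => (hd hij).mono (hCξ i) (hCξ j)
  refine ⟨ρ / 2, half_pos hρ, c, (⋃ i, C i)ᶜ,
    (MeasurableSet.iUnion fun i => (hC i).measurableSet).compl,
    ENNReal.toReal_le_of_le_ofReal hr.le hμC.le, fun x y hxy hy => ?_⟩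
  obtain ⟨j, hj⟩ := Set.mem_iUnion.1 (Set.notMem_compl_iff.1 hy)
  exact hc x y (hxy.trans_lt (half_lt_self hρ)) j hj ▸ hCξ j hj

end Approximation

section Join

open Function

/-- The atom of the join `⋁_{i ∈ F} T^{-i} ξ` consisting of the points with `ξ`-name `g` along `F`;
`Hjoin` is the entropy of the family of these atoms. -/
def joinAtom {Y ι : Type*} (T : Y → Y) (F : Finset ℕ) (ξ : ι → Set Y) (g : F → ι) : Set Y :=
  ⋂ i : F, T^[(i : ℕ)] ⁻¹' ξ (g i)

variable {Y ι : Type*} {T : Y → Y} {F : Finset ℕ} {ξ : ι → Set Y}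

theorem mem_joinAtom {g : F → ι} {x : Y} :
    x ∈ joinAtom T F ξ g ↔ ∀ i : F, T^[(i : ℕ)] x ∈ ξ (g i) := by
  simp only [joinAtom, Set.mem_iInter, Set.mem_preimage]

theorem measurableSet_joinAtom [MeasurableSpace Y] (hT : Measurable T)
    (hξ : ∀ i, MeasurableSet (ξ i)) (g : F → ι) : MeasurableSet (joinAtom T F ξ g) :=
  MeasurableSet.iInter fun i => hT.iterate i (hξ (g i))

theorem pairwise_disjoint_joinAtom (hξ : Pairwise (Disjoint on ξ)) :
    Pairwise (Disjoint on joinAtom T F ξ) := by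
  intro g g' hne
  obtain ⟨i, hi⟩ := Function.ne_iff.1 hne
  exact Set.disjoint_left.2 fun x hx hx' =>
    Set.disjoint_left.1 (hξ hi) (mem_joinAtom.1 hx i) (mem_joinAtom.1 hx' i)

theorem iUnion_joinAtom (hξ : ⋃ i, ξ i = Set.univ) : ⋃ g, joinAtom T F ξ g = Set.univ := by
  choose name hname using fun y => Set.mem_iUnion.1 (hξ.symm ▸ Set.mem_univ y)
  exact Set.eq_univ_of_forall fun x =>
    Set.mem_iUnion.2 ⟨fun i => name (T^[i] x), mem_joinAtom.2 fun i => hname _⟩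

theorem hammingDist_le_sum_indicator [DecidableEq ι] {B : Set Y} {g c : F → ι} {x : Y}
    (h : ∀ i : F, T^[(i : ℕ)] x ∉ B → g i = c i) :
    (hammingDist g c : ℝ) ≤ ∑ i ∈ F, (T^[i] ⁻¹' B).indicator 1 x := by
  have hterm (i : F) :
      (if g i ≠ c i then 1 else 0 : ℝ) ≤ (T^[(i : ℕ)] ⁻¹' B).indicator 1 x := by
    by_cases hi : T^[(i : ℕ)] x ∈ B
    · rw [Set.indicator_of_mem (Set.mem_preimage.2 hi), Pi.one_apply]
      split_ifs <;> norm_num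
    · rw [if_neg (not_not.2 (h i hi))]
      exact Set.indicator_apply_nonneg fun _ => zero_le_one
  rw [hammingDist, Finset.natCast_card_filter, ← Finset.sum_coe_sort F]
  exact Finset.sum_le_sum fun i _ => hterm i

theorem integrable_sum_indicator_preimage_iterate [MeasurableSpace Y] {μ : Measure Y}
    [IsFiniteMeasure μ] (hT : Measurable T) (F : Finset ℕ) {B : Set Y} (hB : MeasurableSet B) :
    Integrable (fun x => ∑ i ∈ F, (T^[i] ⁻¹' B).indicator (1 : Y → ℝ) x) μ :=
  integrable_finsetSum _ fun i _ => (integrable_const (1 : ℝ)).indicator (hT.iterate i hB)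

theorem integral_sum_indicator_preimage_iterate [MeasurableSpace Y] {μ : Measure Y}
    [IsFiniteMeasure μ] (hμ : MeasurePreserving T μ μ) (F : Finset ℕ) {B : Set Y}
    (hB : MeasurableSet B) :
    ∫ x, ∑ i ∈ F, (T^[i] ⁻¹' B).indicator (1 : Y → ℝ) x ∂μ = F.card * μ.real B := by
  have hBi (i : ℕ) : MeasurableSet (T^[i] ⁻¹' B) := hμ.measurable.iterate i hB
  rw [integral_finsetSum F fun i _ => (integrable_const 1).indicator (hBi i),
    Finset.sum_congr rfl fun i _ => integral_indicator_one (hBi i),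
    Finset.sum_congr rfl fun i _ => (hμ.iterate i).measureReal_preimage hB.nullMeasurableSet,
    Finset.sum_const, nsmul_eq_mul]

end Join

section ExtendedReal

theorem limsup_coe_le_limsup_coe_add {α : Type*} {f : Filter α} [f.NeBot] {u v : α → ℝ} {η : ℝ}
    (h : ∀ᶠ a in f, u a ≤ v a + η) :
    limsup (fun a => (u a : EReal)) f ≤ limsup (fun a => (v a : EReal)) f + η := by
  have hη : limsup (fun _ : α => (η : EReal)) f = η := limsup_const _
  calc limsup (fun a => (u a : EReal)) f
      ≤ limsup ((fun a => (v a : EReal)) + fun _ => (η : EReal)) f :=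
        limsup_le_limsup (h.mono fun a ha => EReal.coe_le_coe_iff.2 ha)
    _ ≤ limsup (fun a => (v a : EReal)) f + limsup (fun _ : α => (η : EReal)) f :=
        EReal.limsup_add_le (.inr (by simp [hη])) (.inr (by simp [hη]))
    _ = _ := by rw [hη]

theorem ereal_le_of_forall_pos_le_add {a b : EReal} (h : ∀ η : ℝ, 0 < η → a ≤ b + η) : a ≤ b := by
  refine EReal.le_of_forall_lt_iff_le.1 fun z hz => ?_
  obtain ⟨y, hby, hyz⟩ := EReal.lt_iff_exists_real_btwn.1 hz
  calc a ≤ b + (z - y : ℝ) := h _ (sub_pos.2 (EReal.coe_lt_coe_iff.1 hyz))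
    _ ≤ y + (z - y : ℝ) := by gcongr
    _ = z := by rw [← EReal.coe_add, add_sub_cancel]

end ExtendedReal

section SequenceEntropy

theorem exists_card_eq_spaN [CompactSpace X] {T : X → X} (hT : Continuous T) (F : Finset ℕ)
    {ε : ℝ} (hε : 0 < ε) : ∃ E : Finset X, E.card = spaN T F ε ∧
      ∀ x, ∃ e ∈ E, ∀ i ∈ F, dist (T^[i] x) (T^[i] e) ≤ ε := by
  obtain ⟨t, ht⟩ := isCompact_univ.elim_finite_subcover
    (fun e : X => ⋂ i ∈ F, {x | dist (T^[i] x) (T^[i] e) < ε})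
    (fun e => isOpen_biInter_finset fun i _ =>
      isOpen_lt ((hT.iterate i).dist continuous_const) continuous_const)
    (fun x _ => Set.mem_iUnion.2 ⟨x, Set.mem_iInter₂.2 fun i _ => by simpa using hε⟩)
  have hspan : ∀ x, ∃ e ∈ t, ∀ i ∈ F, dist (T^[i] x) (T^[i] e) ≤ ε := by
    intro x
    obtain ⟨e, he, hxe⟩ := Set.mem_iUnion₂.1 (ht (Set.mem_univ x))
    exact ⟨e, he, fun i hi => (Set.mem_iInter₂.1 hxe i hi).le⟩
  exact Nat.sInf_mem (s := {k | ∃ E : Finset X, E.card = k ∧ _}) ⟨t.card, t, rfl, hspan⟩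

variable [MeasurableSpace X] [BorelSpace X] [CompactSpace X] {T : X → X} {μ : Measure X}
  [IsProbabilityMeasure μ] {k : ℕ} {ξ : Fin k → Set X}

theorem Hjoin_le_log_spaN_add (hT : Continuous T) (hμ : MeasurePreserving T μ μ)
    (hξ : IsMeasPartition ξ) {ε : ℝ} (hε : 0 < ε) {c : X → Fin k} {B : Set X}
    (hB : MeasurableSet B) (hc : ∀ x y, dist y x ≤ ε → y ∉ B → y ∈ ξ (c x)) {z : ℝ} (hz : 0 < z)
    (hz1 : z ≤ 1) (F : Finset ℕ) :
    Hjoin μ T F ξ ≤ Real.log (spaN T F ε)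
      + F.card * (Real.log (1 + (k - 1) * z) + -Real.log z * μ.real B) := by
  obtain ⟨hm, hd, hU⟩ := hξ
  obtain ⟨E, hEcard, hE⟩ := exists_card_eq_spaN hT F hε
  set C : Finset (F → Fin k) := E.image fun e i => c (T^[i] e)
  have hcode : ∀ g, ∀ x ∈ joinAtom T F ξ g, ∃ b ∈ C,
      (hammingDist g b : ℝ) ≤ ∑ i ∈ F, (T^[i] ⁻¹' B).indicator 1 x := by
    intro g x hx
    obtain ⟨e, he, hxe⟩ := hE x
    refine ⟨_, Finset.mem_image_of_mem _ he, hammingDist_le_sum_indicator fun i hi => ?_⟩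
    exact hd.eq (Set.not_disjoint_iff.2 ⟨_, mem_joinAtom.1 hx i, hc _ _ (hxe i i.2) hi⟩)
  have hentropy := sum_negMulLog_measureReal_le_of_hammingDist_le
    (measurableSet_joinAtom hT.measurable hm) (pairwise_disjoint_joinAtom hd) (iUnion_joinAtom hU)
    (integrable_sum_indicator_preimage_iterate (μ := μ) hT.measurable F hB) hcode hz hz1
  rw [integral_sum_indicator_preimage_iterate hμ F hB, Fintype.card_fin, Fintype.card_coe]
    at hentropy
  have hcard : Real.log C.card ≤ Real.log (spaN T F ε) := by
    obtain ⟨x₀⟩ := μ.nonempty_of_neZero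
    obtain ⟨e₀, he₀, -⟩ := hE x₀
    have hC : 0 < C.card := Finset.card_pos.2 ⟨_, Finset.mem_image_of_mem _ he₀⟩
    rw [← hEcard]
    exact Real.log_le_log (Nat.cast_pos.2 hC) (Nat.cast_le.2 Finset.card_image_le)
  calc Hjoin μ T F ξ ≤ Real.log C.card + F.card * Real.log (1 + (k - 1) * z)
        + -Real.log z * (F.card * μ.real B) := hentropy
    _ ≤ Real.log (spaN T F ε) + F.card * Real.log (1 + (k - 1) * z)
        + -Real.log z * (F.card * μ.real B) := by gcongr
    _ = _ := by ring

theorem exists_forall_Hjoin_le_log_spaN_add (hT : Continuous T) (hμ : MeasurePreserving T μ μ)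
    (hξ : IsMeasPartition ξ) {η : ℝ} (hη : 0 < η) :
    ∃ ε > 0, ∀ F : Finset ℕ, Hjoin μ T F ξ ≤ Real.log (spaN T F ε) + F.card * η := by
  obtain ⟨x₀⟩ := μ.nonempty_of_neZero
  obtain ⟨j₀, -⟩ := Set.mem_iUnion.1 (hξ.2.2.symm ▸ Set.mem_univ x₀)
  have : Nonempty (Fin k) := ⟨j₀⟩
  have hk : (1 : ℝ) ≤ k := by exact_mod_cast j₀.pos
  obtain ⟨z, hz, hz1, hkz⟩ : ∃ z : ℝ, 0 < z ∧ z ≤ 1 ∧ k * z ≤ η / 2 :=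
    ⟨min 1 (η / 2 / k), by positivity, min_le_left _ _,
      (le_div_iff₀' (by positivity)).1 (min_le_right _ _)⟩
  have hlogz : 0 ≤ -Real.log z := neg_nonneg.2 (Real.log_nonpos hz.le hz1)
  obtain ⟨ε, hε, c, B, hB, hμB, hc⟩ := exists_index_of_dist_le_off_small_set μ hξ.1 hξ.2.1 hξ.2.2
    (r := η / 2 / (-Real.log z + 1)) (by positivity)
  refine ⟨ε, hε, fun F => (Hjoin_le_log_spaN_add hT hμ hξ hε hB hc hz hz1 F).trans ?_⟩
  have hcount : Real.log (1 + (k - 1) * z) ≤ η / 2 := by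
    have := Real.log_le_sub_one_of_pos (show 0 < 1 + (k - 1) * z by nlinarith)
    linarith
  have hmismatch : -Real.log z * μ.real B ≤ η / 2 :=
    calc -Real.log z * μ.real B ≤ (-Real.log z + 1) * μ.real B := by gcongr; linarith
      _ ≤ η / 2 := (le_div_iff₀' (by positivity)).1 hμB
  gcongr
  linarith

theorem seqEntMeas_le_seqEntTop (hT : Continuous T) (hμ : MeasurePreserving T μ μ) (A : ℕ → ℕ) :
    seqEntMeas μ T A ≤ seqEntTop T A := by
  refine iSup_le fun k => iSup₂_le fun ξ hξ => ereal_le_of_forall_pos_le_add fun η hη => ?_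
  obtain ⟨ε, hε, hH⟩ := exists_forall_Hjoin_le_log_spaN_add hT hμ hξ hη
  have htop : limsup
      (fun n : ℕ => ((Real.log (spaN T ((Finset.Icc 1 n).image A) ε) / n : ℝ) : EReal)) atTop
      ≤ seqEntTop T A := by
    unfold seqEntTop
    exact le_iSup₂_of_le ε hε le_rfl
  refine (limsup_coe_le_limsup_coe_add ?_).trans (add_le_add_left htop _)
  filter_upwards [eventually_gt_atTop 0] with n hn
  have hcard : ((Finset.Icc 1 n).image A).card ≤ n := by
    simpa using Finset.card_image_le (s := Finset.Icc 1 n) (f := A)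
  rw [div_le_iff₀ (Nat.cast_pos.2 hn), add_mul, div_mul_cancel₀ _ (Nat.cast_ne_zero.2 hn.ne')]
  calc Hjoin μ T ((Finset.Icc 1 n).image A) ξ
      ≤ Real.log (spaN T ((Finset.Icc 1 n).image A) ε)
        + ((Finset.Icc 1 n).image A).card * η := hH _
    _ ≤ Real.log (spaN T ((Finset.Icc 1 n).image A) ε) + η * n := by
      rw [mul_comm η]; gcongr

end SequenceEntropy

/-- For a continuous map `T` of a compact metric space `X`, a sequence `A`
of naturals and a `T`-invariant Borel probability measure `μ`, the measure-theoretic sequence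
entropy is bounded by the topological sequence entropy; consequently the supremum over all
invariant Borel probability measures is as well. -/
theorem stmt3 [MeasurableSpace X] [BorelSpace X] [CompactSpace X] [Nonempty X]
    (T : X → X) (hT : Continuous T) (A : ℕ → ℕ)
    (μ : Measure X) [IsProbabilityMeasure μ] (hμ : MeasurePreserving T μ μ) :
    seqEntMeas μ T A ≤ seqEntTop T A ∧
    (⨆ (μ' : Measure X) (_ : IsProbabilityMeasure μ' ∧ MeasurePreserving T μ' μ'),
        seqEntMeas μ' T A) ≤ seqEntTop T A := by
  refine ⟨seqEntMeas_le_seqEntTop hT hμ A, iSup₂_le fun μ' hμ' => ?_⟩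
  have := hμ'.1
  exact seqEntMeas_le_seqEntTop hT hμ'.2 A
end

section
/- Let (T^t)_{t∈ℝ} be a continuous flow on a compact metric space X. Then for every scale a, the upper (respectively lower) topological slow entropy of the flow equals the upper (respectively lower) topological slow entropy of its time-one map T¹. -/
open Filter

variable {X : Type*} [MetricSpace X]

/-- Upper topological slow entropy with respect to a scale `a`, given the spanning numbers
`spa ε n` for the time interval of length `n`:
`ent̄_a = lim_{ε→0⁺} sup({0} ∪ {t > 0 : limsup_n spa(ε,n)/a_n(t) > 0})`
(the limit as `ε → 0⁺` of the antitone-in-`ε` quantity is its supremum over `ε > 0`). -/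
noncomputable def upperSlow (spa : ℝ → ℕ → ℕ) (a : ℕ → ℝ → ℝ) : EReal :=
  ⨆ (ε : ℝ) (_ : 0 < ε),
    sSup (insert (0 : EReal) {x : EReal | ∃ t : ℝ, 0 < t ∧ x = (t : EReal) ∧
      0 < Filter.limsup
            (fun n : ℕ => (((spa ε n : ℝ) / a n t : ℝ) : EReal)) Filter.atTop})

/-- Lower topological slow entropy with respect to a scale `a`. -/
noncomputable def lowerSlow (spa : ℝ → ℕ → ℕ) (a : ℕ → ℝ → ℝ) : EReal :=
  ⨆ (ε : ℝ) (_ : 0 < ε),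
    sSup (insert (0 : EReal) {x : EReal | ∃ t : ℝ, 0 < t ∧ x = (t : EReal) ∧
      0 < Filter.liminf
            (fun n : ℕ => (((spa ε n : ℝ) / a n t : ℝ) : EReal)) Filter.atTop})

/-- `spaFlow T n ε` : spanning numbers of a flow `(T^t)_{t∈ℝ}` for the Bowen metric over
the compact interval `[0, n−1]`. -/
noncomputable def spaFlow (T : ℝ → X → X) (n : ℕ) (ε : ℝ) : ℕ :=
  sInf {k : ℕ | ∃ E : Finset X, E.card = k ∧
    ∀ x : X, ∃ e ∈ E, ∀ t ∈ Set.Icc (0 : ℝ) ((n : ℝ) - 1), dist (T t x) (T t e) ≤ ε}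

/-!
A discrete Bowen ball for the time-one map is a continuous Bowen ball up to a change of radius:
uniform equicontinuity of the maps `T s`, `s ∈ [0, 1]`, says that orbits which are close at time
`⌊t⌋` are still close at time `t`. Hence each family of spanning numbers is bounded by the other at
a radius that does not depend on `n`, and the supremum over radii does not see the difference.
-/

open scoped Uniformity

variable {ι κ : Type*}

/-- The slow entropy at scale `a` formed with an arbitrary functional `L` on sequences; the upper
and lower slow entropies are the cases where `L` is the limit superior and the limit inferior. -/
noncomputable def slowEntropyAlong (L : (ℕ → EReal) → EReal) (spa : ℝ → ℕ → ℕ) (a : ℕ → ℝ → ℝ) :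
    EReal :=
  ⨆ (ε : ℝ) (_ : 0 < ε),
    sSup (insert (0 : EReal) {x : EReal | ∃ t : ℝ, 0 < t ∧ x = (t : EReal) ∧
      0 < L fun n : ℕ => (((spa ε n : ℝ) / a n t : ℝ) : EReal)})

theorem upperSlow_eq_slowEntropyAlong (spa : ℝ → ℕ → ℕ) (a : ℕ → ℝ → ℝ) :
    upperSlow spa a = slowEntropyAlong (limsup · atTop) spa a := rfl

theorem lowerSlow_eq_slowEntropyAlong (spa : ℝ → ℕ → ℕ) (a : ℕ → ℝ → ℝ) :
    lowerSlow spa a = slowEntropyAlong (liminf · atTop) spa a := rfl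

theorem slowEntropyAlong_le_of_forall_exists_le {L : (ℕ → EReal) → EReal} (hL : Monotone L)
    {spa spa' : ℝ → ℕ → ℕ} {a : ℕ → ℝ → ℝ} (hpos : ∀ n t, 0 < t → 0 < a n t)
    (hspa : ∀ ε > 0, ∃ δ > 0, ∀ n, spa ε n ≤ spa' δ n) :
    slowEntropyAlong L spa a ≤ slowEntropyAlong L spa' a := by
  refine iSup₂_le fun ε hε => ?_
  obtain ⟨δ, hδ, hle⟩ := hspa ε hε
  refine le_iSup₂_of_le δ hδ (sSup_le_sSup (Set.insert_subset_insert ?_))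
  rintro x ⟨t, ht, rfl, hlim⟩
  refine ⟨t, ht, rfl, hlim.trans_le (hL fun n => EReal.coe_le_coe_iff.2 ?_)⟩
  exact div_le_div_of_nonneg_right (Nat.cast_le.2 (hle n)) (hpos n t ht).le

/-- A finite set `E` is spanning at radius `ε` for the maps `f i`, `i ∈ S`, if every point is within
`ε` of a point of `E` in the Bowen metric `max_{i ∈ S} dist (f i x) (f i y)`. An arbitrary index
type treats iterates of a map and flows on an interval at once. -/
def IsBowenSpanning (f : ι → X → X) (S : Set ι) (ε : ℝ) (E : Finset X) : Prop :=
  ∀ x, ∃ e ∈ E, ∀ i ∈ S, dist (f i x) (f i e) ≤ ε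

/-- The least cardinality of a spanning set for the Bowen metric of the maps `f i`, `i ∈ S`; its
value is the junk `0` if there is no finite spanning set. -/
noncomputable def bowenSpanningNumber (f : ι → X → X) (S : Set ι) (ε : ℝ) : ℕ :=
  sInf {k | ∃ E : Finset X, E.card = k ∧ IsBowenSpanning f S ε E}

theorem spaN_eq_bowenSpanningNumber (T : X → X) (F : Finset ℕ) (ε : ℝ) :
    spaN T F ε = bowenSpanningNumber (fun i => T^[i]) F ε := rfl

theorem spaFlow_eq_bowenSpanningNumber (T : ℝ → X → X) (n : ℕ) (ε : ℝ) :
    spaFlow T n ε = bowenSpanningNumber T (Set.Icc 0 ((n : ℝ) - 1)) ε := rfl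

theorem IsBowenSpanning.of_forall_imp {f : ι → X → X} {g : κ → X → X} {S : Set ι} {S' : Set κ}
    {δ ε : ℝ} {E : Finset X} (hE : IsBowenSpanning f S δ E)
    (h : ∀ x y, (∀ i ∈ S, dist (f i x) (f i y) ≤ δ) → ∀ j ∈ S', dist (g j x) (g j y) ≤ ε) :
    IsBowenSpanning g S' ε E := fun x =>
  let ⟨e, heE, hxe⟩ := hE x
  ⟨e, heE, h x e hxe⟩

theorem bowenSpanningNumber_le_of_forall_imp {f : ι → X → X} {g : κ → X → X} {S : Set ι}
    {S' : Set κ} {δ ε : ℝ} (hex : ∃ E, IsBowenSpanning f S δ E)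
    (h : ∀ x y, (∀ i ∈ S, dist (f i x) (f i y) ≤ δ) → ∀ j ∈ S', dist (g j x) (g j y) ≤ ε) :
    bowenSpanningNumber g S' ε ≤ bowenSpanningNumber f S δ := by
  obtain ⟨E₀, hE₀⟩ := hex
  obtain ⟨E, hcard, hE⟩ := Nat.sInf_mem
    (s := {k | ∃ E : Finset X, E.card = k ∧ IsBowenSpanning f S δ E}) ⟨_, E₀, rfl, hE₀⟩
  exact Nat.sInf_le ⟨E, hcard, hE.of_forall_imp h⟩

theorem exists_forall_dist_le_of_uniformEquicontinuous {α β : Type*} [PseudoMetricSpace α]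
    [PseudoMetricSpace β] {f : ι → α → β} (hf : UniformEquicontinuous f) {ε : ℝ} (hε : 0 < ε) :
    ∃ δ > 0, ∀ x y, dist x y ≤ δ → ∀ i, dist (f i x) (f i y) ≤ ε := by
  obtain ⟨δ, hδ, h⟩ := Metric.uniformEquicontinuous_iff.1 hf ε hε
  exact ⟨δ / 2, half_pos hδ, fun x y hxy i => (h x y (hxy.trans_lt (half_lt_self hδ)) i).le⟩

theorem exists_isBowenSpanning_of_uniformEquicontinuous (hX : TotallyBounded (Set.univ : Set X))
    {f : ι → X → X} {S : Set ι} (hf : UniformEquicontinuous (S.domRestrict f)) {ε : ℝ}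
    (hε : 0 < ε) : ∃ E, IsBowenSpanning f S ε E := by
  obtain ⟨δ, hδ, h⟩ := exists_forall_dist_le_of_uniformEquicontinuous hf hε
  obtain ⟨E, hE, hcover⟩ := Metric.totallyBounded_iff.1 hX δ hδ
  refine ⟨hE.toFinset, fun x => ?_⟩
  obtain ⟨e, he, hxe⟩ := Set.mem_iUnion₂.1 (hcover (Set.mem_univ x))
  exact ⟨e, hE.mem_toFinset.2 he, fun i hi => h x e (Metric.mem_ball.1 hxe).le ⟨i, hi⟩⟩

theorem exists_isBowenSpanning_iterate (hX : TotallyBounded (Set.univ : Set X)) {f : X → X}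
    (hf : UniformContinuous f) (F : Finset ℕ) {ε : ℝ} (hε : 0 < ε) :
    ∃ E, IsBowenSpanning (fun i => f^[i]) F ε E :=
  exists_isBowenSpanning_of_uniformEquicontinuous hX
    (uniformEquicontinuous_finite.2 fun i => hf.iterate f i.1) hε

theorem uniformEquicontinuous_of_uniformContinuous_uncurry {α β : Type*} [UniformSpace ι]
    [UniformSpace α] [UniformSpace β] {F : ι → α → β}
    (hF : UniformContinuous fun p : ι × α => F p.1 p.2) : UniformEquicontinuous F := by
  intro U hU
  obtain ⟨⟨V, W⟩, ⟨hV, hW⟩, hVW⟩ :=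
    ((𝓤 ι).basis_sets.uniformity_prod (𝓤 α).basis_sets).mem_iff.1 (hF hU)
  filter_upwards [hW] with p hp i using hVW (a := ((i, p.1), (i, p.2))) ⟨refl_mem_uniformity hV, hp⟩

theorem uniformEquicontinuous_of_continuous_of_isCompact {α β : Type*} [UniformSpace ι]
    [UniformSpace α] [CompactSpace α] [UniformSpace β] {F : ι → α → β}
    (hF : Continuous fun p : ι × α => F p.1 p.2) {K : Set ι} (hK : IsCompact K) :
    UniformEquicontinuous fun i : K => F i := by
  have : CompactSpace K := isCompact_iff_compactSpace.1 hK
  exact uniformEquicontinuous_of_uniformContinuous_uncurry <|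
    CompactSpace.uniformContinuous_of_continuous <|
      hF.comp (continuous_subtype_val.prodMap continuous_id)

/-- A one-parameter semigroup of maps indexed by nonnegative times; `T t` is unconstrained for
`t < 0`. No continuity is built in. -/
structure IsSemiflow {α : Type*} (T : ℝ → α → α) : Prop where
  map_zero : T 0 = id
  map_add : ∀ t s, 0 ≤ t → 0 ≤ s → T (t + s) = T t ∘ T s

namespace IsSemiflow

theorem iterate_one {α : Type*} {T : ℝ → α → α} (hT : IsSemiflow T) (n : ℕ) : (T 1)^[n] = T n := by
  induction n with
  | zero => rw [Function.iterate_zero, Nat.cast_zero, hT.map_zero]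
  | succ n ih =>
    rw [Function.iterate_succ, ih, ← hT.map_add _ _ n.cast_nonneg zero_le_one, Nat.cast_succ]

theorem eq_comp_iterate_floor {α : Type*} {T : ℝ → α → α} (hT : IsSemiflow T) {t : ℝ}
    (ht : 0 ≤ t) : T t = T (t - ⌊t⌋₊) ∘ (T 1)^[⌊t⌋₊] := by
  rw [hT.iterate_one, ← hT.map_add _ _ (sub_nonneg.2 (Nat.floor_le ht)) ⌊t⌋₊.cast_nonneg,
    sub_add_cancel]

variable {T : ℝ → X → X} (hT : IsSemiflow T)
include hT

theorem dist_le_of_dist_iterate_le {δ ε : ℝ}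
    (hδ : ∀ x y, dist x y ≤ δ → ∀ s : Set.Icc (0 : ℝ) 1, dist (T s x) (T s y) ≤ ε) {n : ℕ} {x y : X}
    (hxy : ∀ i ∈ Finset.range n, dist ((T 1)^[i] x) ((T 1)^[i] y) ≤ δ) :
    ∀ t ∈ Set.Icc 0 ((n : ℝ) - 1), dist (T t x) (T t y) ≤ ε := by
  rintro t ⟨ht, htn⟩
  have hfloor : ⌊t⌋₊ ∈ Finset.range n :=
    Finset.mem_range.2 ((Nat.floor_lt ht).2 (by linarith))
  have hfract : t - ⌊t⌋₊ ∈ Set.Icc (0 : ℝ) 1 :=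
    ⟨sub_nonneg.2 (Nat.floor_le ht), by linarith [Nat.lt_floor_add_one t]⟩
  rw [hT.eq_comp_iterate_floor ht]
  exact hδ _ _ (hxy _ hfloor) ⟨_, hfract⟩

theorem dist_iterate_le_of_dist_le {ε : ℝ} {n : ℕ} {x y : X}
    (hxy : ∀ t ∈ Set.Icc 0 ((n : ℝ) - 1), dist (T t x) (T t y) ≤ ε) :
    ∀ i ∈ Finset.range n, dist ((T 1)^[i] x) ((T 1)^[i] y) ≤ ε := by
  intro i hi
  have hin : (i : ℝ) + 1 ≤ n := mod_cast Finset.mem_range.1 hi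
  rw [hT.iterate_one]
  exact hxy i ⟨i.cast_nonneg, le_sub_iff_add_le.2 hin⟩

variable (hX : TotallyBounded (Set.univ : Set X))
  (hequi : UniformEquicontinuous fun s : Set.Icc (0 : ℝ) 1 => T s)
include hX hequi

theorem exists_isBowenSpanning (n : ℕ) {ε : ℝ} (hε : 0 < ε) :
    ∃ E, IsBowenSpanning T (Set.Icc 0 ((n : ℝ) - 1)) ε E := by
  have hone : UniformContinuous (T 1) := hequi.uniformContinuous ⟨1, zero_le_one, le_rfl⟩
  obtain ⟨δ, hδ, hclose⟩ := exists_forall_dist_le_of_uniformEquicontinuous hequi hε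
  obtain ⟨E, hE⟩ := exists_isBowenSpanning_iterate hX hone (Finset.range n) hδ
  exact ⟨E, hE.of_forall_imp fun _ _ => hT.dist_le_of_dist_iterate_le hclose⟩

theorem exists_spaFlow_le_spaN {ε : ℝ} (hε : 0 < ε) :
    ∃ δ > 0, ∀ n, spaFlow T n ε ≤ spaN (T 1) (Finset.range n) δ := by
  have hone : UniformContinuous (T 1) := hequi.uniformContinuous ⟨1, zero_le_one, le_rfl⟩
  obtain ⟨δ, hδ, hclose⟩ := exists_forall_dist_le_of_uniformEquicontinuous hequi hε
  refine ⟨δ, hδ, fun n => ?_⟩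
  rw [spaFlow_eq_bowenSpanningNumber, spaN_eq_bowenSpanningNumber]
  exact bowenSpanningNumber_le_of_forall_imp (exists_isBowenSpanning_iterate hX hone _ hδ)
    fun _ _ => hT.dist_le_of_dist_iterate_le hclose

theorem spaN_le_spaFlow (n : ℕ) {ε : ℝ} (hε : 0 < ε) :
    spaN (T 1) (Finset.range n) ε ≤ spaFlow T n ε := by
  rw [spaFlow_eq_bowenSpanningNumber, spaN_eq_bowenSpanningNumber]
  exact bowenSpanningNumber_le_of_forall_imp (hT.exists_isBowenSpanning hX hequi n hε)
    fun _ _ => hT.dist_iterate_le_of_dist_le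

theorem slowEntropyAlong_spaFlow_eq {L : (ℕ → EReal) → EReal} (hL : Monotone L) {a : ℕ → ℝ → ℝ}
    (hpos : ∀ n t, 0 < t → 0 < a n t) :
    slowEntropyAlong L (fun ε n => spaFlow T n ε) a
      = slowEntropyAlong L (fun ε n => spaN (T 1) (Finset.range n) ε) a :=
  le_antisymm
    (slowEntropyAlong_le_of_forall_exists_le hL hpos fun _ => hT.exists_spaFlow_le_spaN hX hequi)
    (slowEntropyAlong_le_of_forall_exists_le hL hpos fun ε hε =>
      ⟨ε, hε, fun n => hT.spaN_le_spaFlow hX hequi n hε⟩)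

end IsSemiflow

theorem stmt19_general (hX : TotallyBounded (Set.univ : Set X)) {T : ℝ → X → X} (hT : IsSemiflow T)
    (hequi : UniformEquicontinuous fun s : Set.Icc (0 : ℝ) 1 => T s) {a : ℕ → ℝ → ℝ}
    (hpos : ∀ n t, 0 < t → 0 < a n t) :
    upperSlow (fun ε n => spaFlow T n ε) a
      = upperSlow (fun ε n => spaN (T 1) (Finset.range n) ε) a ∧
    lowerSlow (fun ε n => spaFlow T n ε) a
      = lowerSlow (fun ε n => spaN (T 1) (Finset.range n) ε) a := by
  simp only [upperSlow_eq_slowEntropyAlong, lowerSlow_eq_slowEntropyAlong]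
  have hlimsup : Monotone fun u : ℕ → EReal => limsup u atTop :=
    fun _ _ h => limsup_le_limsup (.of_forall h)
  have hliminf : Monotone fun u : ℕ → EReal => liminf u atTop :=
    fun _ _ h => liminf_le_liminf (.of_forall h)
  exact ⟨hT.slowEntropyAlong_spaFlow_eq hX hequi hlimsup hpos,
    hT.slowEntropyAlong_spaFlow_eq hX hequi hliminf hpos⟩

/-- For a continuous flow `(T^t)_{t∈ℝ}` on a compact metric space and any
scale `a`, the upper (resp. lower) topological slow entropy of the flow equals the upper
(resp. lower) topological slow entropy of its time-one map. -/
theorem stmt19 [CompactSpace X] [Nonempty X]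
    (T : ℝ → X → X)
    (hcont : Continuous fun p : ℝ × X => T p.1 p.2)
    (hzero : T 0 = id)
    (hadd : ∀ t s : ℝ, T (t + s) = T t ∘ T s)
    (hhomeo : ∀ t : ℝ, ∃ h : X ≃ₜ X, ⇑h = T t)
    (a : ℕ → ℝ → ℝ)
    (hpos : ∀ n : ℕ, ∀ t : ℝ, 0 < t → 0 < a n t)
    (hmono : ∀ t : ℝ, 0 < t → Monotone fun n => a n t)
    (htop' : ∀ t : ℝ, 0 < t → Filter.Tendsto (fun n => a n t) Filter.atTop Filter.atTop)
    (hmonot : ∀ n : ℕ, ∀ t₁ t₂ : ℝ, 0 < t₁ → t₁ ≤ t₂ → a n t₁ ≤ a n t₂) :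
    upperSlow (fun ε n => spaFlow T n ε) a
      = upperSlow (fun ε n => spaN (T 1) (Finset.range n) ε) a ∧
    lowerSlow (fun ε n => spaFlow T n ε) a
      = lowerSlow (fun ε n => spaN (T 1) (Finset.range n) ε) a := 
  stmt19_general isCompact_univ.totallyBounded ⟨hzero, fun t s _ _ => hadd t s⟩
    (uniformEquicontinuous_of_continuous_of_isCompact hcont isCompact_Icc) hpos
end
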